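/- In the MM-SPIR model (with all constraints), for every size-P subset 𝒫 of {1,…,K} and every database index n ∈ {1,…,N}, the conditional entropy of any single answer given its query is bounded by the entropy of the common randomness: H(A_n^{[𝒫]} | Q_n^{[𝒫]}) ≤ H(S). -/

import Mathlib

open Finset

namespace MMSPIR

variable {Ω : Type} [Fintype Ω]

/-- Probability that the random variable `X` takes the value `v`,
under the weight function `p` on the finite sample space `Ω`. -/
noncomputable def prob (p : Ω → ℝ) {V : Type} [DecidableEq V] (X : Ω → V) (v : V) : ℝ :=
  ∑ ω ∈ Finset.univ.filter (fun ω => X ω = v), p ω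

/-- Shannon entropy of `X`, with logarithm taken to base `q`. -/
noncomputable def ent (q : ℕ) (p : Ω → ℝ) {V : Type} [Fintype V] [DecidableEq V]
    (X : Ω → V) : ℝ :=
  -∑ v : V, prob p X v * Real.logb q (prob p X v)

/-- Conditional entropy `H(X | Y)`, base `q`. -/
noncomputable def cent (q : ℕ) (p : Ω → ℝ) {V W : Type} [Fintype V] [DecidableEq V]
    [Fintype W] [DecidableEq W] (X : Ω → V) (Y : Ω → W) : ℝ :=
  ent q p (fun ω => (X ω, Y ω)) - ent q p Y

/-- Mutual information `I(X ; Y)`, base `q`. -/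
noncomputable def mi (q : ℕ) (p : Ω → ℝ) {V W : Type} [Fintype V] [DecidableEq V]
    [Fintype W] [DecidableEq W] (X : Ω → V) (Y : Ω → W) : ℝ :=
  ent q p X + ent q p Y - ent q p (fun ω => (X ω, Y ω))

/-- Conditional mutual information `I(X ; Y | Z)`, base `q`. -/
noncomputable def cmi (q : ℕ) (p : Ω → ℝ) {U V W : Type} [Fintype U] [DecidableEq U]
    [Fintype V] [DecidableEq V] [Fintype W] [DecidableEq W]
    (X : Ω → U) (Y : Ω → V) (Z : Ω → W) : ℝ :=
  cent q p X Z + cent q p Y Z - cent q p (fun ω => (X ω, Y ω)) Z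

/-- `X` and `Y` have the same distribution. -/
def IdentDist (p : Ω → ℝ) {V : Type} [DecidableEq V] (X Y : Ω → V) : Prop :=
  ∀ v, prob p X v = prob p Y v

/-! ### Entropy toolkit -/

lemma prob_nonneg {p : Ω → ℝ} (hp0 : ∀ ω, 0 ≤ p ω) {V : Type} [DecidableEq V]
    (X : Ω → V) (v : V) : 0 ≤ prob p X v :=
  Finset.sum_nonneg (fun ω _ => hp0 ω)

lemma le_prob {p : Ω → ℝ} (hp0 : ∀ ω, 0 ≤ p ω) {V : Type} [DecidableEq V]
    (X : Ω → V) (ω : Ω) : p ω ≤ prob p X (X ω) :=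
  Finset.single_le_sum (f := p) (fun ω _ => hp0 ω) (by simp)

lemma sum_prob_mul (p : Ω → ℝ) {V : Type} [Fintype V] [DecidableEq V]
    (X : Ω → V) (g : V → ℝ) : ∑ v, prob p X v * g v = ∑ ω, p ω * g (X ω) := by
  rw [← Finset.sum_fiberwise (s := Finset.univ) (g := X)]
  refine Finset.sum_congr rfl fun v _ => ?_
  rw [prob, Finset.sum_mul]
  refine Finset.sum_congr rfl fun ω h => ?_
  rw [(Finset.mem_filter.1 h).2]

lemma ent_eq (q : ℕ) (p : Ω → ℝ) {V : Type} [Fintype V] [DecidableEq V]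
    (X : Ω → V) : ent q p X = -∑ ω, p ω * Real.logb q (prob p X (X ω)) := by
  rw [ent, sum_prob_mul p X (fun v => Real.logb q (prob p X v))]

lemma ent_mono {q : ℕ} (hq : 2 ≤ q) {p : Ω → ℝ} (hp0 : ∀ ω, 0 ≤ p ω)
    {V U : Type} [Fintype V] [DecidableEq V] [Fintype U] [DecidableEq U]
    (X : Ω → V) (Z : Ω → U) (h : ∀ ω ω', X ω = X ω' → Z ω = Z ω') :
    ent q p Z ≤ ent q p X := by
  rw [ent_eq, ent_eq, neg_le_neg_iff]
  refine Finset.sum_le_sum fun ω _ => ?_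
  rcases (hp0 ω).eq_or_lt with h0 | h0
  · simp [← h0]
  refine mul_le_mul_of_nonneg_left ?_ (hp0 ω)
  have hX := h0.trans_le (le_prob hp0 X ω)
  refine Real.logb_le_logb_of_le (by exact_mod_cast hq) hX ?_
  refine Finset.sum_le_sum_of_subset_of_nonneg ?_ (fun ω _ _ => hp0 ω)
  intro ω' h'
  simp only [Finset.mem_filter, Finset.mem_univ, true_and] at h' ⊢
  exact h _ _ h'

lemma sum_prob_fst (p : Ω → ℝ) {V U : Type} [Fintype V] [DecidableEq V] [DecidableEq U]
    (X : Ω → V) (Z : Ω → U) (z : U) :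
    ∑ x, prob p (fun ω => (X ω, Z ω)) (x, z) = prob p Z z := by
  unfold prob
  rw [← Finset.sum_fiberwise (s := Finset.univ.filter (fun ω => Z ω = z)) (g := X)]
  refine Finset.sum_congr rfl fun x _ => ?_
  refine Finset.sum_congr ?_ fun _ _ => rfl
  ext ω
  simp [and_comm]

lemma submod_core {q : ℕ} (hq : 2 ≤ q) {p : Ω → ℝ} (hp0 : ∀ ω, 0 ≤ p ω)
    {V V' U : Type} [Fintype V] [DecidableEq V]
    [Fintype V'] [DecidableEq V'] [Fintype U] [DecidableEq U]
    (X : Ω → V) (Y : Ω → V') (Z : Ω → U) :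
    ent q p (fun ω => (X ω, Y ω, Z ω)) + ent q p Z ≤
      ent q p (fun ω => (X ω, Z ω)) + ent q p (fun ω => (Y ω, Z ω)) := by
  have hlog : 0 < Real.log q := Real.log_pos (by exact_mod_cast hq)
  set PT := prob p (fun ω => (X ω, Y ω, Z ω)) with hPT
  set PX := prob p (fun ω => (X ω, Z ω)) with hPX
  set PY := prob p (fun ω => (Y ω, Z ω)) with hPY
  set PZ := prob p Z with hPZ
  have nX : ∀ v, 0 ≤ PX v := prob_nonneg hp0 _
  have nY : ∀ v, 0 ≤ PY v := prob_nonneg hp0 _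
  have nZ : ∀ v, 0 ≤ PZ v := prob_nonneg hp0 _
  have nT : ∀ v, 0 ≤ PT v := prob_nonneg hp0 _
  let R : V × V' × U → ℝ := fun t =>
    PX (t.1, t.2.2) * PY (t.2.1, t.2.2) / (PT t * PZ t.2.2)
  have key : ∑ ω, p ω * R (X ω, Y ω, Z ω) ≤ ∑ ω, p ω := by
    rw [← sum_prob_mul p (fun ω => (X ω, Y ω, Z ω)) R]
    calc ∑ v, PT v * R v
        ≤ ∑ v : V × V' × U, PX (v.1, v.2.2) * PY (v.2.1, v.2.2) / PZ v.2.2 := by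
          refine Finset.sum_le_sum fun v _ => ?_
          rcases (nT v).eq_or_lt with h0 | h0
          · rw [← h0, zero_mul]
            exact div_nonneg (mul_nonneg (nX _) (nY _)) (nZ _)
          · apply le_of_eq
            simp only [R]
            rw [← div_div, div_right_comm, mul_div_cancel₀ _ h0.ne']
      _ = ∑ z, PZ z * PZ z / PZ z := by
          rw [Fintype.sum_prod_type]
          simp only [Fintype.sum_prod_type]
          have c : ∀ g : V → V' → U → ℝ,
              ∑ x, ∑ y, ∑ z, g x y z = ∑ z, ∑ x, ∑ y, g x y z := fun g =>
            calc ∑ x, ∑ y, ∑ z, g x y z = ∑ x, ∑ z, ∑ y, g x y z :=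
                  Finset.sum_congr rfl fun x _ => Finset.sum_comm
              _ = _ := Finset.sum_comm
          rw [c]
          refine Finset.sum_congr rfl fun z _ => ?_
          have e1 : ∑ x, PX (x, z) = PZ z := sum_prob_fst p X Z z
          have e2 : ∑ x, PY (x, z) = PZ z := sum_prob_fst p Y Z z
          have e3 : PZ z * PZ z / PZ z = (∑ x, PX (x, z)) * (∑ y, PY (y, z)) / PZ z := by
            rw [e1, e2]
          rw [e3, Finset.sum_mul_sum, Finset.sum_div]
          refine Finset.sum_congr rfl fun x _ => ?_
          rw [Finset.sum_div]
      _ = ∑ z, PZ z * 1 := by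
          refine Finset.sum_congr rfl fun z _ => ?_
          rw [mul_self_div_self, mul_one]
      _ = ∑ ω, p ω := by
          rw [hPZ, sum_prob_mul p Z (fun _ => 1)]
          simp
  have pt : ∀ ω, p ω * (Real.logb q (PX (X ω, Z ω)) + Real.logb q (PY (Y ω, Z ω))
      - Real.logb q (PT (X ω, Y ω, Z ω)) - Real.logb q (PZ (Z ω))) ≤
      (p ω * R (X ω, Y ω, Z ω) - p ω) / Real.log q := by
    intro ω
    rcases (hp0 ω).eq_or_lt with h0 | h0
    · simp [← h0]
    have aX : 0 < PX (X ω, Z ω) := h0.trans_le (le_prob hp0 (fun ω => (X ω, Z ω)) ω)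
    have aY : 0 < PY (Y ω, Z ω) := h0.trans_le (le_prob hp0 (fun ω => (Y ω, Z ω)) ω)
    have aT : 0 < PT (X ω, Y ω, Z ω) :=
      h0.trans_le (le_prob hp0 (fun ω => (X ω, Y ω, Z ω)) ω)
    have aZ : 0 < PZ (Z ω) := h0.trans_le (le_prob hp0 Z ω)
    have hR : 0 < R (X ω, Y ω, Z ω) := by
      simp only [R]; positivity
    have e : Real.log (R (X ω, Y ω, Z ω)) = Real.log (PX (X ω, Z ω))
        + Real.log (PY (Y ω, Z ω)) - Real.log (PT (X ω, Y ω, Z ω)) - Real.log (PZ (Z ω)) := by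
      simp only [R]
      rw [Real.log_div (by positivity) (by positivity), Real.log_mul aX.ne' aY.ne',
        Real.log_mul aT.ne' aZ.ne']
      ring
    have l := Real.log_le_sub_one_of_pos hR
    simp only [Real.logb]
    rw [← add_div, ← sub_div, ← sub_div, ← e, ← mul_div_assoc]
    refine div_le_div_of_nonneg_right ?_ hlog.le
    nlinarith
  have s := Finset.sum_le_sum (fun ω (_ : ω ∈ Finset.univ) => pt ω)
  rw [← Finset.sum_div, Finset.sum_sub_distrib] at s
  have s2 : (∑ ω, p ω * R (X ω, Y ω, Z ω) - ∑ ω, p ω) / Real.log q ≤ 0 :=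
    div_nonpos_of_nonpos_of_nonneg (by linarith) hlog.le
  have s3 := s.trans s2
  simp only [mul_sub, mul_add, Finset.sum_sub_distrib, Finset.sum_add_distrib] at s3
  rw [ent_eq, ent_eq, ent_eq, ent_eq]
  linarith

lemma submod {q : ℕ} (hq : 2 ≤ q) {p : Ω → ℝ} (hp0 : ∀ ω, 0 ≤ p ω)
    {V V' U T : Type} [Fintype V] [DecidableEq V] [Fintype T] [DecidableEq T]
    [Fintype V'] [DecidableEq V'] [Fintype U] [DecidableEq U]
    (X : Ω → V) (Y : Ω → V') (Z : Ω → U) (J : Ω → T)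
    (hX : ∀ ω ω', X ω = X ω' → Z ω = Z ω') (hY : ∀ ω ω', Y ω = Y ω' → Z ω = Z ω')
    (hJ : ∀ ω ω', X ω = X ω' → Y ω = Y ω' → J ω = J ω') :
    ent q p J + ent q p Z ≤ ent q p X + ent q p Y := by
  have h := submod_core hq hp0 X Y Z
  have h1 := ent_mono hq hp0 (fun ω => (X ω, Y ω, Z ω)) J (by
    intro ω ω' h
    simp only [Prod.mk.injEq] at h
    exact hJ _ _ h.1 h.2.1)
  have h2 := ent_mono hq hp0 X (fun ω => (X ω, Z ω)) (by
    intro ω ω' h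
    simp only [Prod.mk.injEq]
    exact ⟨h, hX _ _ h⟩)
  have h3 := ent_mono hq hp0 Y (fun ω => (Y ω, Z ω)) (by
    intro ω ω' h
    simp only [Prod.mk.injEq]
    exact ⟨h, hY _ _ h⟩)
  linarith

lemma subadd {q : ℕ} (hq : 2 ≤ q) {p : Ω → ℝ} (hp0 : ∀ ω, 0 ≤ p ω) (hp1 : ∑ ω, p ω = 1)
    {V V' T : Type} [Fintype V] [DecidableEq V] [Fintype T] [DecidableEq T]
    [Fintype V'] [DecidableEq V']
    (X : Ω → V) (Y : Ω → V') (J : Ω → T)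
    (hJ : ∀ ω ω', X ω = X ω' → Y ω = Y ω' → J ω = J ω') :
    ent q p J ≤ ent q p X + ent q p Y := by
  have h := submod hq hp0 X Y (fun _ => ()) J (fun _ _ _ => rfl) (fun _ _ _ => rfl) hJ
  have h0 : ent q p (fun _ : Ω => ()) = 0 := by
    simp [ent, prob, hp1]
  linarith

lemma ent_ident (q : ℕ) {p : Ω → ℝ} {V U : Type} [Fintype V] [DecidableEq V]
    [Fintype U] [DecidableEq U] {X Y : Ω → V} (h : IdentDist p X Y) (f : V → U) :
    ent q p (fun ω => f (X ω)) = ent q p (fun ω => f (Y ω)) := by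
  have e : ∀ (X : Ω → V) u, prob p (fun ω => f (X ω)) u =
      ∑ v, prob p X v * (if f v = u then 1 else 0) := by
    intro X u
    rw [sum_prob_mul p X (fun v => if f v = u then 1 else 0)]
    simp [prob, Finset.sum_filter]
  have e2 : ∀ u, prob p (fun ω => f (X ω)) u = prob p (fun ω => f (Y ω)) u := by
    intro u
    rw [e, e]
    simp only [h _]
  simp only [ent, e2]

/-- The tuple of messages indexed by `C`. -/
def res {K : ℕ} {MT : Type} (W : Fin K → Ω → MT) (C : Finset (Fin K)) (ω : Ω) :
    {x : Fin K // x ∈ C} → MT := fun k => W k.1 ω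

lemma res_eq {Ω : Type} {K : ℕ} {MT : Type} (W : Fin K → Ω → MT) (C : Finset (Fin K)) (ω ω' : Ω) :
    res W C ω = res W C ω' ↔ ∀ k ∈ C, W k ω = W k ω' := by
  simp [res, funext_iff]

theorem answer_entropy_le_common_randomness
    {Ω MT QT AT FT ST : Type}
    [Fintype Ω] [Fintype MT] [DecidableEq MT] [Fintype QT] [DecidableEq QT]
    [Fintype AT] [DecidableEq AT] [Fintype FT] [DecidableEq FT]
    [Fintype ST] [DecidableEq ST]
    (N K P L q : ℕ) (hN : 2 ≤ N) (hK : 2 ≤ K) (hP1 : 1 ≤ P) (hP2 : P ≤ K - 1)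
    (hL : 1 ≤ L) (hq : IsPrimePow q)
    (p : Ω → ℝ) (hp0 : ∀ ω, 0 ≤ p ω) (hp1 : (∑ ω, p ω) = 1)
    (W : Fin K → Ω → MT) (F : Ω → FT) (S : Ω → ST)
    (Q : Finset (Fin K) → Fin N → Ω → QT)
    (A : Finset (Fin K) → Fin N → Ω → AT)
    (hWk : ∀ k, ent q p (W k) = (L : ℝ))
    (hWall : ent q p (fun ω (k : Fin K) => W k ω) = (K : ℝ) * L)
    (hind : ent q p (fun ω => (F ω, S ω, fun k : Fin K => W k ω)) =
      ent q p F + ent q p S + ent q p (fun ω (k : Fin K) => W k ω))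
    (hQdet : ∀ 𝒫₀ : Finset (Fin K), 𝒫₀.card = P →
      cent q p (fun ω (n : Fin N) => Q 𝒫₀ n ω) F = 0)
    (hAdet : ∀ 𝒫₀ : Finset (Fin K), 𝒫₀.card = P → ∀ n : Fin N,
      cent q p (A 𝒫₀ n) (fun ω => (Q 𝒫₀ n ω, (fun k : Fin K => W k ω), S ω)) = 0)
    (hrel : ∀ 𝒫₀ : Finset (Fin K), 𝒫₀.card = P →
      cent q p (fun ω (k : {x : Fin K // x ∈ 𝒫₀}) => W k.1 ω)
        (fun ω => ((fun n : Fin N => A 𝒫₀ n ω), F ω)) = 0)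
    (hupriv : ∀ (n : Fin N) (𝒫₁ 𝒫₂ : Finset (Fin K)), 𝒫₁.card = P → 𝒫₂.card = P →
      IdentDist p
        (fun ω => (Q 𝒫₁ n ω, A 𝒫₁ n ω, (fun k : Fin K => W k ω), S ω))
        (fun ω => (Q 𝒫₂ n ω, A 𝒫₂ n ω, (fun k : Fin K => W k ω), S ω)))
    (hdpriv : ∀ 𝒫₀ : Finset (Fin K), 𝒫₀.card = P →
      mi q p (fun ω (k : {x : Fin K // x ∈ 𝒫₀ᶜ}) => W k.1 ω)
        (fun ω => ((fun n : Fin N => Q 𝒫₀ n ω), (fun n : Fin N => A 𝒫₀ n ω), F ω)) = 0)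
    : ∀ (𝒫₀ : Finset (Fin K)), 𝒫₀.card = P → ∀ n : Fin N,
      cent q p (A 𝒫₀ n) (Q 𝒫₀ n) ≤ ent q p S := by
  intro B hB n
  have hq2 : 2 ≤ q := hq.two_le
  have hPK : P < K := by omega
  set E : Finset (Fin K) → ℝ := fun C => ent q p (res W C) with hE
  set G : Finset (Fin K) → ℝ := fun C =>
    ent q p (fun ω => (Q B n ω, A B n ω, res W C ω)) with hG
  -- message entropies
  have f1 : ∀ C, E C ≤ C.card * (L : ℝ) := by
    intro C
    induction C using Finset.induction_on with
    | empty =>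
      have h := ent_mono hq2 hp0 (fun _ => ()) (res W ∅) (by
        intro ω ω' _
        rw [res_eq]
        simp)
      have h0 : ent q p (fun _ : Ω => ()) = 0 := by
        simp [ent, prob, hp1]
      simp only [hE, Finset.card_empty, Nat.cast_zero, zero_mul]
      linarith
    | insert i C hi ih =>
      have h := subadd hq2 hp0 hp1 (W i) (res W C) (res W (insert i C)) (by
        intro ω ω' h1 h2
        rw [res_eq] at h2 ⊢
        intro k hk
        rcases Finset.mem_insert.1 hk with rfl | hk
        · exact h1
        · exact h2 k hk)
      rw [hWk] at h
      rw [Finset.card_insert_of_notMem hi]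
      push_cast
      simp only [hE] at ih ⊢
      linarith
  have f2 : ∀ C : Finset (Fin K), C.card * (L : ℝ) ≤ E C := by
    intro C
    have h := subadd hq2 hp0 hp1 (res W C) (res W Cᶜ) (fun ω (k : Fin K) => W k ω) (by
      intro ω ω' h1 h2
      rw [res_eq] at h1 h2
      funext k
      by_cases hk : k ∈ C
      · exact h1 k hk
      · exact h2 k (by simpa using hk))
    rw [hWall] at h
    have h1 := f1 Cᶜ
    have hc : ((C.card : ℝ)) + (Cᶜ.card : ℝ) = K := by
      have := Finset.card_add_card_compl C
      rw [Fintype.card_fin] at this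
      exact_mod_cast this
    simp only [hE] at h1 ⊢
    rw [← hc] at h
    linarith
  -- user privacy transfer
  have tr : ∀ B' : Finset (Fin K), B'.card = P → ∀ C,
      ent q p (fun ω => (Q B' n ω, A B' n ω, res W C ω)) = G C := by
    intro B' h' C
    exact ent_ident q (hupriv n B' B h' hB)
      (fun t => (t.1, t.2.1, fun k : {x : Fin K // x ∈ C} => t.2.2.1 k.1))
  have f3 : ∀ B' : Finset (Fin K), B'.card = P → E B'ᶜ + G B' ≤ G Finset.univ := by
    intro B' h'
    rw [← tr B' h', ← tr B' h']
    have d : ent q p (res W B'ᶜ) + ent q p (fun ω => ((fun n : Fin N => Q B' n ω),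
        (fun n : Fin N => A B' n ω), F ω)) - ent q p (fun ω => (res W B'ᶜ ω,
        ((fun n : Fin N => Q B' n ω), (fun n : Fin N => A B' n ω), F ω))) = 0 := hdpriv B' h'
    have r : ent q p (fun ω => (res W B' ω, ((fun n : Fin N => A B' n ω), F ω)))
        - ent q p (fun ω => ((fun n : Fin N => A B' n ω), F ω)) = 0 := hrel B' h'
    have s1 := submod hq2 hp0
      (fun ω => (res W B' ω, ((fun n : Fin N => A B' n ω), F ω)))
      (fun ω => ((fun n : Fin N => Q B' n ω), (fun n : Fin N => A B' n ω), F ω))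
      (fun ω => ((fun n : Fin N => A B' n ω), F ω))
      (fun ω => (((fun n : Fin N => Q B' n ω), (fun n : Fin N => A B' n ω), F ω), res W B' ω))
      (by intro ω ω'; simp only [Prod.mk.injEq]; tauto)
      (by intro ω ω'; simp only [Prod.mk.injEq]; tauto)
      (by intro ω ω'; simp only [Prod.mk.injEq]; tauto)
    have s2 := submod hq2 hp0
      (fun ω => (Q B' n ω, A B' n ω, res W Finset.univ ω))
      (fun ω => (((fun n : Fin N => Q B' n ω), (fun n : Fin N => A B' n ω), F ω), res W B' ω))
      (fun ω => (Q B' n ω, A B' n ω, res W B' ω))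
      (fun ω => (res W B'ᶜ ω,
        ((fun n : Fin N => Q B' n ω), (fun n : Fin N => A B' n ω), F ω)))
      (by
        intro ω ω'
        simp only [Prod.mk.injEq, res_eq]
        rintro ⟨h1, h2, h3⟩
        exact ⟨h1, h2, fun k _ => h3 k (Finset.mem_univ k)⟩)
      (by
        intro ω ω'
        simp only [Prod.mk.injEq, res_eq]
        rintro ⟨⟨h1, h2, _⟩, h3⟩
        exact ⟨congrFun h1 n, congrFun h2 n, h3⟩)
      (by
        intro ω ω'
        simp only [Prod.mk.injEq, res_eq]
        rintro ⟨_, _, h3⟩ ⟨h4, _⟩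
        exact ⟨fun k _ => h3 k (Finset.mem_univ k), h4⟩)
    simp only [hE]
    linarith
  have f4 : ∀ i : Fin K, L + G (Finset.univ.erase i) ≤ G Finset.univ := by
    intro i
    obtain ⟨B', hsub, h'⟩ := Finset.exists_subset_card_eq
      (s := (Finset.univ.erase i : Finset (Fin K))) (n := P) (by
        rw [Finset.card_erase_of_mem (Finset.mem_univ i), Finset.card_univ, Fintype.card_fin]
        exact hP2)
    have hi : i ∈ B'ᶜ := by
      rw [Finset.mem_compl]
      intro h
      exact (Finset.mem_erase.1 (hsub h)).1 rfl
    have a := f3 B' h'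
    have b := f2 B'ᶜ
    have c := f1 (B'ᶜ.erase i)
    have cc : (B'ᶜ.card : ℝ) = (B'ᶜ.erase i).card + 1 := by
      rw [← Finset.card_erase_add_one hi]
      push_cast
      rfl
    have d := subadd hq2 hp0 hp1 (fun ω => (Q B n ω, A B n ω, res W B' ω))
      (res W (B'ᶜ.erase i))
      (fun ω => (Q B n ω, A B n ω, res W (Finset.univ.erase i) ω)) (by
        intro ω ω'
        simp only [Prod.mk.injEq, res_eq]
        rintro ⟨h1, h2, h3⟩ h4
        refine ⟨h1, h2, fun k hk => ?_⟩
        by_cases hk' : k ∈ B'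
        · exact h3 k hk'
        · exact h4 k (by
            rw [Finset.mem_erase, Finset.mem_compl]
            exact ⟨(Finset.mem_erase.1 hk).1, hk'⟩))
    rw [cc] at b
    simp only [hE, hG] at a b c d ⊢
    linarith
  have f5 : ∀ C : Finset (Fin K), C.card * (L : ℝ) + G ∅ ≤ G C := by
    intro C
    induction C using Finset.induction_on with
    | empty => simp
    | insert i C hi ih =>
      have a := f4 i
      have b := submod hq2 hp0 (fun ω => (Q B n ω, A B n ω, res W (insert i C) ω))
        (fun ω => (Q B n ω, A B n ω, res W (Finset.univ.erase i) ω))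
        (fun ω => (Q B n ω, A B n ω, res W C ω))
        (fun ω => (Q B n ω, A B n ω, res W Finset.univ ω))
        (by
          intro ω ω'
          simp only [Prod.mk.injEq, res_eq]
          rintro ⟨h1, h2, h3⟩
          exact ⟨h1, h2, fun k hk => h3 k (Finset.mem_insert_of_mem hk)⟩)
        (by
          intro ω ω'
          simp only [Prod.mk.injEq, res_eq]
          rintro ⟨h1, h2, h3⟩
          refine ⟨h1, h2, fun k hk => h3 k ?_⟩
          rw [Finset.mem_erase]
          exact ⟨fun h => hi (h ▸ hk), Finset.mem_univ k⟩)
        (by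
          intro ω ω'
          simp only [Prod.mk.injEq, res_eq]
          rintro ⟨h1, h2, h3⟩ ⟨_, _, h4⟩
          refine ⟨h1, h2, fun k _ => ?_⟩
          by_cases hk : k = i
          · exact h3 k (by simp [hk])
          · exact h4 k (by simp [hk]))
      rw [Finset.card_insert_of_notMem hi]
      push_cast
      simp only [hG] at a b ih ⊢
      linarith
  have g1 := f5 Finset.univ
  rw [Finset.card_univ, Fintype.card_fin] at g1
  have g2 := ent_mono hq2 hp0 (fun ω => (Q B n ω, A B n ω, res W ∅ ω))
    (fun ω => (A B n ω, Q B n ω)) (by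
      intro ω ω'
      simp only [Prod.mk.injEq]
      tauto)
  have g3 := ent_mono hq2 hp0
    (fun ω => (A B n ω, (Q B n ω, (fun k : Fin K => W k ω), S ω)))
    (fun ω => (Q B n ω, A B n ω, res W Finset.univ ω)) (by
      intro ω ω'
      simp only [Prod.mk.injEq, res_eq]
      rintro ⟨h1, h2, h3, _⟩
      exact ⟨h2, h1, fun k _ => congrFun h3 k⟩)
  have g4 := hAdet B hB n
  have g5 := subadd hq2 hp0 hp1 (fun ω => (Q B n ω, S ω)) (fun ω (k : Fin K) => W k ω)
    (fun ω => (Q B n ω, (fun k : Fin K => W k ω), S ω)) (by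
      intro ω ω'
      simp only [Prod.mk.injEq]
      tauto)
  have g6 := subadd hq2 hp0 hp1 (Q B n) S (fun ω => (Q B n ω, S ω)) (by
      intro ω ω'
      simp only [Prod.mk.injEq]
      tauto)
  rw [hWall] at g5
  simp only [cent, hG] at g1 g4 ⊢
  linarith

end MMSPIR
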